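/- Let P be a property (a set of complete theories of Σ) and suppose the set of isolated points of P is finite with exactly n ≥ 1 elements. Then for every positive integer k, there exists a Σ-sentence φ such that P_φ is finite with |P_φ| = k if and only if 1 ≤ k ≤ n. That is, the finite part of the pt-spectrum of P equals {1, 2, …, n}. -/

import Mathlib

open FirstOrder Language

theorem aux_model.{u, v} {L : FirstOrder.Language.{u, v}} {T : L.Theory} (h : T.IsMaximal) :
    ∃ M : Theory.ModelType.{u, v, max u v} T, ∀ φ : L.Sentence, φ ∈ T ↔ M ⊨ φ := by
  obtain ⟨M⟩ := h.1
  refine ⟨M, fun φ => ⟨fun hφ => Theory.realize_sentence_of_mem T hφ, fun hφ => ?_⟩⟩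
  refine (h.2 φ).resolve_right fun hn => ?_
  have := Theory.realize_sentence_of_mem (M := M) T hn
  rw [Sentence.realize_not] at this
  exact this hφ

theorem aux_not {L : FirstOrder.Language} {T : L.Theory} (h : T.IsMaximal) (φ : L.Sentence) :
    φ.not ∈ T ↔ φ ∉ T := by
  obtain ⟨M, hM⟩ := aux_model h
  rw [hM, hM, Sentence.realize_not]

theorem aux_inf {L : FirstOrder.Language} {T : L.Theory} (h : T.IsMaximal) (φ ψ : L.Sentence) :
    (φ ⊓ ψ : L.Sentence) ∈ T ↔ φ ∈ T ∧ ψ ∈ T := by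
  obtain ⟨M, hM⟩ := aux_model h
  rw [hM, hM, hM]
  exact Formula.realize_inf

theorem aux_sup {L : FirstOrder.Language} {T : L.Theory} (h : T.IsMaximal) (φ ψ : L.Sentence) :
    (φ ⊔ ψ : L.Sentence) ∈ T ↔ φ ∈ T ∨ ψ ∈ T := by
  obtain ⟨M, hM⟩ := aux_model h
  rw [hM, hM, hM]
  exact Formula.realize_sup

theorem aux_bot {L : FirstOrder.Language} {T : L.Theory} (h : T.IsMaximal) :
    (⊥ : L.Sentence) ∉ T := by
  obtain ⟨M, hM⟩ := aux_model h
  rw [hM]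
  exact fun h => Formula.realize_bot.1 h

theorem aux_sep {L : FirstOrder.Language} {T : L.Theory} (h : T.IsMaximal) (S : Set L.Theory)
    (hS : S.Finite) (hm : ∀ T' ∈ S, T'.IsMaximal) (hT : T ∉ S) :
    ∃ φ : L.Sentence, φ ∈ T ∧ ∀ T' ∈ S, φ ∉ T' := by
  induction S, hS using Set.Finite.induction_on with
  | empty => exact ⟨(⊥ : L.Sentence).not, (aux_not h _).2 (aux_bot h), by simp⟩
  | @insert a s ha hs ih =>
    simp only [Set.mem_insert_iff, not_or] at hT
    obtain ⟨φ, h1, h2⟩ := ih (fun T' h' => hm T' (Or.inr h')) hT.2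
    have hma := hm a (Or.inl rfl)
    have : ∃ ψ : L.Sentence, ψ ∈ T ∧ ψ ∉ a := by
      by_contra! hc
      refine hT.1 (Set.Subset.antisymm hc fun ψ hψ => ?_)
      by_contra hn
      exact (aux_not hma ψ).1 (hc _ ((aux_not h ψ).2 hn)) hψ
    obtain ⟨ψ, h3, h4⟩ := this
    refine ⟨φ ⊓ ψ, (aux_inf h _ _).2 ⟨h1, h3⟩, fun T' h' hc => ?_⟩
    have hc := (aux_inf (hm T' h') _ _).1 hc
    rcases h' with rfl | h'
    · exact h4 hc.2
    · exact h2 T' h' hc.1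

theorem aux_def {L : FirstOrder.Language} (P : Set L.Theory)
    (hP : ∀ T ∈ P, T.IsMaximal) (S : Set L.Theory) (hS : S.Finite)
    (hsub : S ⊆ {T ∈ P | ∃ φ : L.Sentence, {T' ∈ P | φ ∈ T'} = {T}}) :
    ∃ φ : L.Sentence, {T ∈ P | φ ∈ T} = S := by
  induction S, hS using Set.Finite.induction_on with
  | empty =>
    refine ⟨⊥, Set.eq_empty_of_forall_notMem fun T hT => aux_bot (hP T hT.1) hT.2⟩
  | @insert a s ha hs ih =>
    obtain ⟨φ, hφ⟩ := ih fun T h => hsub (Or.inr h)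
    obtain ⟨-, ψ, hψ⟩ := hsub (Or.inl rfl : a ∈ insert a s)
    refine ⟨ψ ⊔ φ, ?_⟩
    rw [Set.insert_eq, ← hφ, ← hψ]
    ext T
    constructor
    · rintro ⟨h1, h2⟩
      exact ((aux_sup (hP T h1) _ _).1 h2).imp (fun h => ⟨h1, h⟩) (fun h => ⟨h1, h⟩)
    · rintro (⟨h1, h2⟩ | ⟨h1, h2⟩)
      · exact ⟨h1, (aux_sup (hP T h1) _ _).2 (Or.inl h2)⟩
      · exact ⟨h1, (aux_sup (hP T h1) _ _).2 (Or.inr h2)⟩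

/-- If a property `P` has exactly `n ≥ 1` isolated points (theories `T ∈ P` isolated by a
sentence φ with `P_φ = {T}`), then for each positive integer `k` there is a sentence φ with
`P_φ` finite of cardinality `k` iff `1 ≤ k ≤ n`; i.e. the finite part of the pt-spectrum of `P`
is `{1, …, n}`. -/
theorem ptSpectrum_finite_part_of_isolated {L : FirstOrder.Language} (P : Set L.Theory)
    (hP : ∀ T ∈ P, T.IsMaximal) (n : ℕ) (hn : 1 ≤ n)
    (hisoFin : {T ∈ P | ∃ φ : L.Sentence, {T' ∈ P | φ ∈ T'} = {T}}.Finite)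
    (hisoCard : {T ∈ P | ∃ φ : L.Sentence, {T' ∈ P | φ ∈ T'} = {T}}.ncard = n) :
    ∀ k : ℕ, 1 ≤ k →
      ((∃ φ : L.Sentence, {T ∈ P | φ ∈ T}.Finite ∧ {T ∈ P | φ ∈ T}.ncard = k) ↔ k ≤ n) := by
  intro k hk
  constructor
  · rintro ⟨φ, hfin, rfl⟩
    rw [← hisoCard]
    refine Set.ncard_le_ncard ?_ hisoFin
    rintro T ⟨hT, hφ⟩
    refine ⟨hT, ?_⟩
    obtain ⟨ψ, h1, h2⟩ := aux_sep (hP T hT) ({T ∈ P | φ ∈ T} \ {T})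
      (hfin.subset Set.sdiff_subset) (fun T' h => hP T' h.1.1) (fun h => h.2 rfl)
    refine ⟨φ ⊓ ψ, ?_⟩
    ext T'
    constructor
    · rintro ⟨h3, h4⟩
      have h4 := (aux_inf (hP T' h3) _ _).1 h4
      by_contra hne
      exact h2 T' ⟨⟨h3, h4.1⟩, hne⟩ h4.2
    · rintro rfl
      exact ⟨hT, (aux_inf (hP _ hT) _ _).2 ⟨hφ, h1⟩⟩
  · intro hkn
    rw [← hisoCard] at hkn
    obtain ⟨S, hS, hc⟩ := Set.exists_subset_card_eq hkn
    have hSf := hisoFin.subset hS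
    obtain ⟨φ, hφ⟩ := aux_def P hP S hSf hS
    exact ⟨φ, by rw [hφ]; exact ⟨hSf, hc⟩⟩
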